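/- Suppose (q_a)_{a∈I} is a quasipolynomial solution of the Q-system such that each q_a has degree e_a ≥ 1 with constant leading coefficient c_a > 0. Then for every a ∈ I the leading coefficients satisfy e_a · c_a² = Π_{b : C(a,b)<0} ( c_b · (C(b,a)/C(a,b))^{e_b} )^{−C(a,b)}, an identity of positive real numbers (note C(b,a)/C(a,b) > 0 whenever C(a,b) < 0). -/

import Mathlib

open Filter Topology

lemma aux_shift {e : ℕ} {c : ℝ} {Q : ℕ → ℝ}
    (hQ : Tendsto (fun n : ℕ => Q n / (n : ℝ) ^ e) atTop (𝓝 c)) :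
    Tendsto (fun n : ℕ => Q (n + 1) / (n : ℝ) ^ e) atTop (𝓝 c) := by
  have h1 := hQ.comp (tendsto_add_atTop_nat 1)
  have h2 : Tendsto (fun n : ℕ => (1 + 1 / (n : ℝ)) ^ e) atTop (𝓝 1) := by
    simpa using ((tendsto_one_div_atTop_nhds_zero_nat (𝕜 := ℝ)).const_add 1).pow e
  have h3 := h1.mul h2
  rw [mul_one] at h3
  refine h3.congr' ?_
  filter_upwards [eventually_ge_atTop 1] with n hn
  have hn' : (0 : ℝ) < n := by exact_mod_cast hn
  have : (1 + 1 / (n : ℝ)) = ((n : ℝ) + 1) / n := by field_simp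
  simp only [Function.comp, this, div_pow]
  push_cast
  field_simp

lemma aux_evpos {f : ℕ → ℝ} (hf : Tendsto f atTop (𝓝 0))
    (h : ∀ᶠ n in atTop, f (n + 1) ≤ f n) : ∀ᶠ n in atTop, 0 ≤ f n := by
  obtain ⟨N, hN⟩ := eventually_atTop.1 h
  filter_upwards [eventually_ge_atTop N] with n hn
  have ha : Antitone (fun k => f (k + n)) := by
    refine antitone_nat_of_succ_le fun k => ?_
    have := hN (k + n) (by omega)
    rwa [show k + 1 + n = k + n + 1 by ring]
  have := ha.le_of_tendsto ((tendsto_add_atTop_iff_nat n).2 hf) 0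
  simpa using this

lemma aux_powdiff (e : ℕ) (he : 1 ≤ e) :
    Tendsto (fun n : ℕ => (((n : ℝ) + 1) ^ e - (n : ℝ) ^ e) / (n : ℝ) ^ (e - 1)) atTop
      (𝓝 (e : ℝ)) := by
  have hd : HasDerivAt (fun x : ℝ => x ^ e) (e : ℝ) 1 := by
    simpa using hasDerivAt_pow e (1 : ℝ)
  have h := hd.tendsto_slope
  have hx : Tendsto (fun n : ℕ => (1 : ℝ) + 1 / (n : ℝ)) atTop (𝓝[≠] 1) := by
    refine tendsto_nhdsWithin_iff.2 ⟨?_, ?_⟩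
    · simpa using (tendsto_one_div_atTop_nhds_zero_nat (𝕜 := ℝ)).const_add 1
    · filter_upwards [eventually_ge_atTop 1] with n hn
      have hn' : (0 : ℝ) < n := by exact_mod_cast hn
      simp; omega
  refine (h.comp hx).congr' ?_
  filter_upwards [eventually_ge_atTop 1] with n hn
  have hn' : (0 : ℝ) < n := by exact_mod_cast hn
  obtain ⟨k, rfl⟩ : ∃ k, e = k + 1 := ⟨e - 1, by omega⟩
  have : (1 + 1 / (n : ℝ)) = ((n : ℝ) + 1) / n := by field_simp
  simp only [Function.comp, slope_def_field, add_sub_cancel_left, Nat.add_sub_cancel]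
  rw [this, div_pow]
  field_simp
  simp
  ring

lemma aux_core {e : ℕ} (he : 1 ≤ e) {c : ℝ} (hc : 0 < c) {Q : ℕ → ℝ}
    (hQ : Tendsto (fun n : ℕ => Q n / (n : ℝ) ^ e) atTop (𝓝 c)) (s A : ℝ)
    (hs : 0 < s * (A - e))
    (h : ∀ᶠ n : ℕ in atTop, s * A ≤ s * ((n : ℝ) * (n + 1) *
      (Q (n + 1) / Q n - Q (n + 2) / Q (n + 1)))) : False := by
  have he' : (0 : ℝ) < e := by exact_mod_cast he
  have hpos : ∀ᶠ n : ℕ in atTop, 0 < Q n := by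
    filter_upwards [hQ.eventually (lt_mem_nhds hc), eventually_ge_atTop 1] with n h1 hn
    have hn' : (0 : ℝ) < n := by exact_mod_cast hn
    have := (div_pos_iff_of_pos_right (pow_pos hn' e)).1 h1
    exact this
  have hQ1 := aux_shift hQ
  have hv : Tendsto (fun n : ℕ => Q (n + 1) / Q n) atTop (𝓝 1) := by
    have := hQ1.div hQ hc.ne'
    rw [div_self hc.ne'] at this
    refine this.congr' ?_
    filter_upwards [hpos, eventually_ge_atTop 1] with n h1 hn
    have hn' : (0 : ℝ) < n := by exact_mod_cast hn
    simp only [Pi.div_apply]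
    field_simp
  have hf : Tendsto (fun n : ℕ => s * (Q (n + 1) / Q n - 1 - A * (1 / (n : ℝ)))) atTop (𝓝 0) := by
    simpa using ((hv.sub_const 1).sub
      ((tendsto_one_div_atTop_nhds_zero_nat (𝕜 := ℝ)).const_mul A)).const_mul s
  have hf2 := aux_evpos hf (by
    filter_upwards [h, eventually_ge_atTop 1] with n h1 hn
    have hn' : (0 : ℝ) < n := by exact_mod_cast hn
    have e1 : 1 / (n : ℝ) - 1 / ((n : ℝ) + 1) = 1 / ((n : ℝ) * (n + 1)) := by
      field_simp; ring
    have e2 : s * A * (1 / ((n : ℝ) * (n + 1))) ≤ s * (Q (n + 1) / Q n - Q (n + 2) / Q (n + 1)) := by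
      rw [mul_one_div, div_le_iff₀ (by positivity)]
      linarith
    rw [← e1] at e2
    push_cast
    rw [show n + 1 + 1 = n + 2 by ring]
    nlinarith)
  set B : ℝ := (c + A * c / e) / 2 with hB
  have hBe : B * e = (c * e + A * c) / 2 := by rw [hB]; field_simp
  have hlim : Tendsto (fun n : ℕ => s * (A * (Q n / (n : ℝ) ^ e) -
      B * ((((n : ℝ) + 1) ^ e - (n : ℝ) ^ e) / (n : ℝ) ^ (e - 1)))) atTop
      (𝓝 (s * (A * c - B * e))) :=
    ((hQ.const_mul A).sub ((aux_powdiff e he).const_mul B)).const_mul s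
  have hlp : 0 < s * (A * c - B * e) := by
    rw [hBe]
    have := mul_pos hs hc
    nlinarith
  have hmono : ∀ᶠ n : ℕ in atTop, s * (Q n - B * (n : ℝ) ^ e) ≤
      s * (Q (n + 1) - B * ((n : ℝ) + 1) ^ e) := by
    filter_upwards [hlim.eventually (lt_mem_nhds hlp), hf2, hpos, eventually_ge_atTop 1]
      with n h1 h2 h3 hn
    have hn' : (0 : ℝ) < n := by exact_mod_cast hn
    have h4 := mul_nonneg h2 h3.le
    have h5 : s * (Q (n + 1) / Q n - 1 - A * (1 / (n : ℝ))) * Q n =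
        s * (Q (n + 1) - Q n - A * (Q n / n)) := by field_simp
    rw [h5] at h4
    have h6 := mul_pos h1 (pow_pos hn' (e - 1))
    have h7 : s * (A * (Q n / (n : ℝ) ^ e) -
      B * ((((n : ℝ) + 1) ^ e - (n : ℝ) ^ e) / (n : ℝ) ^ (e - 1))) * (n : ℝ) ^ (e - 1) =
      s * (A * (Q n / n) - B * (((n : ℝ) + 1) ^ e - (n : ℝ) ^ e)) := by
      obtain ⟨k, rfl⟩ : ∃ k, e = k + 1 := ⟨e - 1, by omega⟩
      simp only [Nat.add_sub_cancel]
      field_simp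
      ring
    rw [h7] at h6
    linarith
  obtain ⟨N, hN⟩ := eventually_atTop.1 hmono
  have hbd : ∀ n ≥ N, s * (Q N - B * (N : ℝ) ^ e) ≤ s * (Q n - B * (n : ℝ) ^ e) := by
    intro n hn
    induction n, hn using Nat.le_induction with
    | base => exact le_rfl
    | succ n hn ih => push_cast; exact ih.trans (hN n hn)
  have hl1 : Tendsto (fun n : ℕ => s * (Q n / (n : ℝ) ^ e - B)) atTop (𝓝 (s * (c - B))) :=
    (hQ.sub_const B).const_mul s
  have hl2 : Tendsto (fun n : ℕ => s * (Q N - B * (N : ℝ) ^ e) / (n : ℝ) ^ e) atTop (𝓝 0) := by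
    refine Tendsto.const_div_atTop ?_ _
    exact (tendsto_pow_atTop (by omega)).comp tendsto_natCast_atTop_atTop
  have hle : 0 ≤ s * (c - B) := by
    refine le_of_tendsto_of_tendsto hl2 hl1 ?_
    filter_upwards [eventually_ge_atTop N, eventually_ge_atTop 1] with n h1 hn
    have hn' : (0 : ℝ) < n := by exact_mod_cast hn
    rw [div_le_iff₀ (by positivity)]
    refine (hbd n h1).trans (le_of_eq ?_)
    field_simp
  have h8 : 0 ≤ s * (c - B) * e := mul_nonneg hle he'.le
  have h9 : s * (c - B) * e = s * (c * e - B * e) := by ring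
  rw [h9, hBe] at h8
  have := mul_pos hs hc
  nlinarith

lemma aux_main {e D : ℕ} (he : 1 ≤ e) {c K : ℝ} (hc : 0 < c) (hK : 0 < K) {Q : ℕ → ℝ}
    (hQ : Tendsto (fun n : ℕ => Q n / (n : ℝ) ^ e) atTop (𝓝 c))
    (hR : Tendsto (fun n : ℕ => (Q (n + 1) ^ 2 - Q (n + 2) * Q n) / (n : ℝ) ^ D) atTop (𝓝 K)) :
    e * c ^ 2 = K := by
  have he' : (0 : ℝ) < e := by exact_mod_cast he
  have hQ1 := aux_shift hQ
  have hpos : ∀ᶠ n : ℕ in atTop, 0 < Q n := by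
    filter_upwards [hQ.eventually (lt_mem_nhds hc), eventually_ge_atTop 1] with n h1 hn
    have hn' : (0 : ℝ) < n := by exact_mod_cast hn
    exact (div_pos_iff_of_pos_right (pow_pos hn' e)).1 h1
  have hpos1 : ∀ᶠ n : ℕ in atTop, 0 < Q (n + 1) := (tendsto_add_atTop_nat 1).eventually hpos
  have h1n : Tendsto (fun n : ℕ => 1 + 1 / (n : ℝ)) atTop (𝓝 1) := by
    simpa using (tendsto_one_div_atTop_nhds_zero_nat (𝕜 := ℝ)).const_add 1
  have hu := ((hR.div (hQ.mul hQ1) (mul_pos hc hc).ne').mul h1n)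
  rw [mul_one] at hu
  set T : ℕ → ℝ := fun n => (n : ℝ) * (n + 1) *
      (Q (n + 1) / Q n - Q (n + 2) / Q (n + 1)) with hT
  set U : ℕ → ℝ := fun n => (Q (n + 1) ^ 2 - Q (n + 2) * Q n) / (n : ℝ) ^ D /
    (Q n / (n : ℝ) ^ e * (Q (n + 1) / (n : ℝ) ^ e)) * (1 + 1 / (n : ℝ)) with hU
  have hu' : Tendsto U atTop (𝓝 (K / (c * c))) := hu
  have hrel : ∀ᶠ n : ℕ in atTop, T n * (n : ℝ) ^ (2 * e) = U n * (n : ℝ) ^ (D + 2) := by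
    filter_upwards [hpos, hpos1, eventually_ge_atTop 1] with n h1 h2 hn
    have hn' : (0 : ℝ) < n := by exact_mod_cast hn
    simp only [hT, hU]
    field_simp
    ring
  have hk : 0 < K / (c * c) := by positivity
  have hcase : D + 2 = 2 * e := by
    by_contra hne
    rcases lt_or_gt_of_ne hne with hlt | hgt
    · -- T tends to zero
      obtain ⟨r, hr⟩ : ∃ r, 2 * e = D + 2 + (r + 1) := ⟨2 * e - (D + 2) - 1, by omega⟩
      have h0 : Tendsto (fun n : ℕ => U n / (n : ℝ) ^ (r + 1)) atTop (𝓝 0) :=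
        hu'.div_atTop ((tendsto_pow_atTop (by omega)).comp tendsto_natCast_atTop_atTop)
      refine aux_core he hc hQ (-1) (e / 2) (by linarith) ?_
      filter_upwards [h0.eventually (gt_mem_nhds (half_pos he')), hrel, eventually_ge_atTop 1]
        with n h1 h2 hn
      have hn' : (0 : ℝ) < n := by exact_mod_cast hn
      have : T n = U n / (n : ℝ) ^ (r + 1) := by
        rw [hr, pow_add _ (D + 2)] at h2
        rw [eq_div_iff (by positivity)]
        have hp := (pow_pos hn' (D + 2)).ne'
        apply mul_right_cancel₀ hp
        rw [← h2]; ring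
      change -1 * ((e : ℝ) / 2) ≤ -1 * T n
      rw [this]; linarith
    · obtain ⟨r, hr⟩ : ∃ r, D + 2 = 2 * e + (r + 1) := ⟨(D + 2) - 2 * e - 1, by omega⟩
      have h0 : Tendsto (fun n : ℕ => U n * (n : ℝ) ^ (r + 1)) atTop atTop :=
        hu'.pos_mul_atTop hk ((tendsto_pow_atTop (by omega)).comp tendsto_natCast_atTop_atTop)
      refine aux_core he hc hQ 1 (e + 1) (by linarith) ?_
      filter_upwards [h0.eventually_ge_atTop ((e : ℝ) + 1), hrel, eventually_ge_atTop 1]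
        with n h1 h2 hn
      have hn' : (0 : ℝ) < n := by exact_mod_cast hn
      have : T n = U n * (n : ℝ) ^ (r + 1) := by
        rw [hr, pow_add _ (2 * e)] at h2
        have hp := (pow_pos hn' (2 * e)).ne'
        apply mul_right_cancel₀ hp
        rw [h2]; ring
      change 1 * ((e : ℝ) + 1) ≤ 1 * T n
      rw [this]; linarith
  have hTlim : Tendsto T atTop (𝓝 (K / (c * c))) := by
    refine hu'.congr' ?_
    filter_upwards [hrel, eventually_ge_atTop 1] with n h2 hn
    have hn' : (0 : ℝ) < n := by exact_mod_cast hn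
    rw [hcase] at h2
    exact (mul_right_cancel₀ (pow_pos hn' (2 * e)).ne' h2).symm
  have hfin : K / (c * c) = e := by
    by_contra hne
    rcases lt_or_gt_of_ne hne with hlt | hgt
    · obtain ⟨A, hA1, hA2⟩ := exists_between hlt
      refine aux_core he hc hQ (-1) A (by linarith) ?_
      filter_upwards [hTlim.eventually (gt_mem_nhds hA1)] with n h1
      change -1 * A ≤ -1 * T n
      linarith
    · obtain ⟨A, hA1, hA2⟩ := exists_between hgt
      refine aux_core he hc hQ 1 A (by linarith) ?_
      filter_upwards [hTlim.eventually (lt_mem_nhds hA2)] with n h1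
      change 1 * A ≤ 1 * T n
      linarith
  rw [← hfin]; field_simp

lemma aux_poly {p : Polynomial ℝ} {e : ℕ} {c : ℝ} (hc : 0 < c)
    (h1 : p.natDegree = e) (h2 : p.coeff e = c) :
    Tendsto (fun m : ℤ => p.eval (m : ℝ) / (m : ℝ) ^ e) atTop (𝓝 c) := by
  have hp : p ≠ 0 := by rintro rfl; simp at h2; linarith
  have h := Polynomial.div_tendsto_leadingCoeff_div_of_degree_eq p (Polynomial.X ^ e)
    (by rw [Polynomial.degree_X_pow, Polynomial.degree_eq_natDegree hp, h1])
  have hl : p.leadingCoeff = c := by rw [Polynomial.leadingCoeff, h1, h2]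
  simp only [hl, Polynomial.eval_pow, Polynomial.eval_X, Polynomial.leadingCoeff_X_pow, div_one] at h
  exact h.comp tendsto_intCast_atTop_atTop

lemma aux_quasi {q : ℤ → ℝ} {e : ℕ} {c : ℝ} (hc : 0 < c)
    (hqp : ∃ ℓ : ℕ, 1 ≤ ℓ ∧ ∃ p : ℤ → Polynomial ℝ,
      (∀ j : ℤ, 0 ≤ j → j < (ℓ : ℤ) →
        (p j).natDegree = e ∧ (p j).coeff e = c) ∧
      (∀ m : ℤ, q m = (p (m % (ℓ : ℤ))).eval (m : ℝ))) :
    Tendsto (fun m : ℤ => q m / (m : ℝ) ^ e) atTop (𝓝 c) := by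
  obtain ⟨l, hl, p, hp, hq⟩ := hqp
  rw [Metric.tendsto_nhds]
  intro ε hε
  have : ∀ᶠ m : ℤ in atTop, ∀ j ∈ Finset.Ico (0 : ℤ) l,
      dist ((p j).eval (m : ℝ) / (m : ℝ) ^ e) c < ε := by
    rw [eventually_all_finset]
    intro j hj
    rw [Finset.mem_Ico] at hj
    obtain ⟨h1, h2⟩ := hp j hj.1 hj.2
    exact Metric.tendsto_nhds.1 (aux_poly hc h1 h2) ε hε
  filter_upwards [this] with m hm
  rw [hq]
  exact hm _ (Finset.mem_Ico.2 ⟨Int.emod_nonneg _ (by omega), Int.emod_lt_of_pos _ (by omega)⟩)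

lemma aux_arg (x y k : ℤ) (hx : x < 0) (hy : y < 0) :
    Tendsto (fun n : ℕ => (Int.fdiv (x * ((n : ℤ) + 1) - k) y : ℝ) / (n : ℝ)) atTop
      (𝓝 ((x : ℝ) / y)) := by
  have hy' : (y : ℝ) < 0 := by exact_mod_cast hy
  have key : ∀ n : ℕ, ∃ r : ℤ, 0 ≤ r ∧ r < -y ∧
      y * Int.fdiv (x * ((n : ℤ) + 1) - k) y = x * ((n : ℤ) + 1) - k + r := by
    intro n
    generalize x * ((n : ℤ) + 1) - k = z
    refine ⟨(-z) % (-y), Int.emod_nonneg _ (by omega), Int.emod_lt_of_pos _ (by omega), ?_⟩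
    rw [← Int.neg_fdiv_neg, Int.fdiv_eq_ediv_of_nonneg _ (by omega)]
    have := Int.mul_ediv_add_emod (-z) (-y)
    linarith
  choose r hr0 hr1 hr using key
  have hb : Tendsto (fun n : ℕ => ((x : ℝ) - k + r n) / (n : ℝ)) atTop (𝓝 0) := by
    have h1 : Tendsto (fun n : ℕ => ((x : ℝ) - k) / (n : ℝ)) atTop (𝓝 0) :=
      tendsto_const_nhds.div_atTop tendsto_natCast_atTop_atTop
    have h2 : Tendsto (fun n : ℕ => ((x : ℝ) - k - y) / (n : ℝ)) atTop (𝓝 0) :=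
      tendsto_const_nhds.div_atTop tendsto_natCast_atTop_atTop
    refine tendsto_of_tendsto_of_tendsto_of_le_of_le h1 h2 (fun n => ?_) (fun n => ?_)
    · have : (0 : ℝ) ≤ r n := by exact_mod_cast hr0 n
      exact div_le_div_of_nonneg_right (by linarith) (Nat.cast_nonneg n)
    · have : (r n : ℝ) < -y := by exact_mod_cast hr1 n
      exact div_le_div_of_nonneg_right (by linarith) (Nat.cast_nonneg n)
  have h3 := (hb.const_add (x : ℝ)).div_const (y : ℝ)
  rw [add_zero] at h3
  refine h3.congr' ?_
  filter_upwards [eventually_ge_atTop 1] with n hn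
  have hn' : (0 : ℝ) < n := by exact_mod_cast hn
  have h4 : (y : ℝ) * (Int.fdiv (x * ((n : ℤ) + 1) - k) y : ℝ) = x * ((n : ℝ) + 1) - k + r n := by
    exact_mod_cast hr n
  have hyn := hy'.ne
  rw [div_eq_iff hyn]
  field_simp
  linarith

lemma aux_factor {q : ℤ → ℝ} {e : ℕ} {c : ℝ}
    (hq : Tendsto (fun m : ℤ => q m / (m : ℝ) ^ e) atTop (𝓝 c))
    (x y k : ℤ) (hx : x < 0) (hy : y < 0) :
    Tendsto (fun n : ℕ => q (Int.fdiv (x * ((n : ℤ) + 1) - k) y) / (n : ℝ) ^ e) atTop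
      (𝓝 (c * ((x : ℝ) / y) ^ e)) := by
  have ha := aux_arg x y k hx hy
  have hx' : (x : ℝ) < 0 := by exact_mod_cast hx
  have hy' : (y : ℝ) < 0 := by exact_mod_cast hy
  have hpos : 0 < (x : ℝ) / y := div_pos_of_neg_of_neg hx' hy'
  have hreal : Tendsto (fun n : ℕ => (Int.fdiv (x * ((n : ℤ) + 1) - k) y : ℝ)) atTop atTop := by
    refine (ha.pos_mul_atTop hpos tendsto_natCast_atTop_atTop).congr' ?_
    filter_upwards [eventually_ge_atTop 1] with n hn
    have hn' : (0 : ℝ) < n := by exact_mod_cast hn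
    field_simp
  have hint : Tendsto (fun n : ℕ => Int.fdiv (x * ((n : ℤ) + 1) - k) y) atTop atTop :=
    tendsto_intCast_atTop_iff.1 hreal
  refine ((hq.comp hint).mul (ha.pow e)).congr' ?_
  filter_upwards [hreal.eventually_gt_atTop 0, eventually_ge_atTop 1] with n h1 hn
  have hn' : (0 : ℝ) < n := by exact_mod_cast hn
  simp only [Function.comp]
  rw [div_pow]
  field_simp

/-- Leading coefficients of a quasipolynomial solution of the Q-system.  `C` is a generalized Cartan
matrix on a finite set `I`; `(q a)` is a family of quasipolynomials (each given piecewise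
by polynomial constituents of degree `e a` with constant leading coefficient `c a > 0`)
satisfying the Q-system.  Then the leading coefficients satisfy
`e a · (c a)² = ∏_{b : C a b < 0} (c b · (C b a / C a b)^(e b))^(−C a b)`. -/
theorem stmt_11 {I : Type*} [Fintype I] [DecidableEq I]
    (C : I → I → ℤ)
    (hdiag : ∀ a, C a a = 2)
    (hoff : ∀ a b, a ≠ b → C a b ≤ 0)
    (hsymzero : ∀ a b, (C a b < 0 ↔ C b a < 0))
    (q : I → ℤ → ℝ) (e : I → ℕ) (c : I → ℝ)
    (he : ∀ a, 1 ≤ e a) (hc : ∀ a, 0 < c a)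
    (hqp : ∀ a, ∃ ℓ : ℕ, 1 ≤ ℓ ∧ ∃ p : ℤ → Polynomial ℝ,
      (∀ j : ℤ, 0 ≤ j → j < (ℓ : ℤ) →
        (p j).natDegree = e a ∧ (p j).coeff (e a) = c a) ∧
      (∀ m : ℤ, q a m = (p (m % (ℓ : ℤ))).eval (m : ℝ)))
    (hQ : ∀ a, ∀ m : ℤ,
      q a m ^ 2 - q a (m + 1) * q a (m - 1) =
        ∏ b ∈ Finset.univ.filter (fun b => C a b < 0),
          ∏ k ∈ Finset.range (-(C a b)).toNat,
            q b (Int.fdiv (C b a * m - (k : ℤ)) (C a b))) :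
    (∀ a : I, (e a : ℝ) * (c a) ^ 2 =
      ∏ b ∈ Finset.univ.filter (fun b => C a b < 0),
        (c b * ((C b a : ℝ) / (C a b : ℝ)) ^ (e b)) ^ (-(C a b)).toNat) := by

  intro a
  have hq : ∀ b, Tendsto (fun m : ℤ => q b m / (m : ℝ) ^ e b) atTop (𝓝 (c b)) :=
    fun b => aux_quasi (hc b) (hqp b)
  refine aux_main (D := ∑ b ∈ Finset.univ.filter (fun b => C a b < 0),
    ∑ _k ∈ Finset.range (-(C a b)).toNat, e b) (Q := fun n : ℕ => q a (n : ℤ)) (he a) (hc a) ?_ ?_ ?_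
  · refine Finset.prod_pos fun b hb => ?_
    have h1 : C a b < 0 := (Finset.mem_filter.1 hb).2
    have h2 : C b a < 0 := (hsymzero a b).1 h1
    have h1' : (C a b : ℝ) < 0 := by exact_mod_cast h1
    have h2' : (C b a : ℝ) < 0 := by exact_mod_cast h2
    exact pow_pos (mul_pos (hc b) (pow_pos (div_pos_of_neg_of_neg h2' h1') _)) _
  · exact (hq a).comp tendsto_natCast_atTop_atTop
  · have hlim : Tendsto (fun n : ℕ => ∏ b ∈ Finset.univ.filter (fun b => C a b < 0),
        ∏ k ∈ Finset.range (-(C a b)).toNat,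
          (q b (Int.fdiv (C b a * ((n : ℤ) + 1) - (k : ℤ)) (C a b)) / (n : ℝ) ^ e b)) atTop
        (𝓝 (∏ b ∈ Finset.univ.filter (fun b => C a b < 0),
          ∏ _k ∈ Finset.range (-(C a b)).toNat,
          (c b * ((C b a : ℝ) / (C a b : ℝ)) ^ (e b)))) := by
      refine tendsto_finsetProd _ fun b hb => tendsto_finsetProd _ fun k _ => ?_
      have h1 : C a b < 0 := (Finset.mem_filter.1 hb).2
      exact aux_factor (hq b) _ _ _ ((hsymzero a b).1 h1) h1
    simp only [Finset.prod_const, Finset.card_range] at hlim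
    refine hlim.congr fun n => ?_
    have h := hQ a ((n : ℤ) + 1)
    rw [show (n : ℤ) + 1 + 1 = ((n + 2 : ℕ) : ℤ) by push_cast; ring,
      show (n : ℤ) + 1 - 1 = n by ring] at h
    rw [Nat.cast_add_one n, h]
    simp only [Finset.prod_div_distrib, Finset.prod_pow_eq_pow_sum]
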